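/- Let M be a smooth compact Riemannian manifold of dimension n with geodesic distance d and Riemannian measure μ, and let a > 1. Then there exists a constant C₃ > 0 as follows. For each j ∈ ℤ, write M as a finite disjoint union of measurable subsets {E_{j,k} : 1 ≤ k ≤ N_j}, each of diameter less than a^j, and select x_{j,k} ∈ E_{j,k}. Suppose {Φ_{j,k}} and {Ψ_{j,k}} are two systems of functions with Φ_{j,k}, Ψ_{j,k} ∈ 𝒩_{x_{j,k}, a^j} for all j, k, and suppose 0 ≤ J ≤ 1. Then for all x, y ∈ M with x ≠ y, ∑_{j∈ℤ} ∑_{k=1}^{N_j} a^{−jJ} μ(E_{j,k}) |Φ_{j,k}(x) Ψ_{j,k}(y)| ≤ C₃ d(x,y)^{−n−J}. -/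

import Mathlib

open Metric Manifold MeasureTheory

noncomputable section

/-- The class `𝒩_{x,t}` of smooth functions `Φ` on `M` with
`tⁿ |(d(x,y)/t)^N Φ(y)| ≤ 1` for all `y ∈ M` and `0 ≤ N ≤ n+2`. -/
def NClass (n : ℕ) {M : Type*} [MetricSpace M]
    [ChartedSpace (EuclideanSpace ℝ (Fin n)) M]
    (x : M) (t : ℝ) : Set (M → ℂ) :=
  {Φ | ContMDiff (𝓡 n) 𝓘(ℝ, ℂ) (⊤ : ℕ∞) Φ ∧
    ∀ (y : M) (N : ℕ), N ≤ n + 2 → t ^ n * ((dist x y / t) ^ N * ‖Φ y‖) ≤ 1}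

open scoped ENNReal NNReal Topology

/-!
At scale `t = a ^ j` the size of `Φ` and `Ψ` is governed by the kernel
`K_t(w, x) = t ^ (-s) * (1 + d(w, x) / t) ^ (-p)`, with `s = n` and `p = n + 2`. A point `w` is at
distance at least `d(x, y) / 2` from `x` or from `y`, so one of the two factors of
`K_t(w, x) * K_t(w, y)` can be traded for a power of `d(x, y)` that decays geometrically as `t`
moves away from `d(x, y)`. The other factor remains to be summed over the pieces of the partition:
since `K_t` is essentially constant on balls of radius `t`, that sum is dominated by `∫ K_t dμ`,
which is bounded uniformly in `t` because balls of radius `r` have measure `O(r ^ s)`. What is left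
is a two-sided geometric series in `j`.
-/

section Growth

variable {X : Type*} [PseudoMetricSpace X] [MeasurableSpace X] {μ : Measure X} {s : ℝ}

/-- Upper Ahlfors regularity of dimension `s`: balls of radius `r` have measure `O(r ^ s)`,
uniformly in the centre. It stands in for the volume bound on geodesic balls. -/
def IsUpperRegular (μ : Measure X) (s : ℝ) : Prop :=
  ∃ C : ℝ≥0, ∀ (x : X) (r : ℝ), 0 < r → μ (closedBall x r) ≤ C * ENNReal.ofReal (r ^ s)

lemma exists_eventually_forall_measure_closedBall_le [CompactSpace X]
    (h : ∀ x : X, ∃ C : ℝ≥0, ∃ U ∈ 𝓝 x, ∀ᶠ r in 𝓝[>] (0 : ℝ), ∀ y ∈ U,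
      μ (closedBall y r) ≤ C * ENNReal.ofReal (r ^ s)) :
    ∃ C : ℝ≥0, ∀ᶠ r in 𝓝[>] (0 : ℝ), ∀ y,
      μ (closedBall y r) ≤ C * ENNReal.ofReal (r ^ s) := by
  suffices ∃ C : ℝ≥0, ∀ᶠ r in 𝓝[>] (0 : ℝ), ∀ y ∈ (Set.univ : Set X),
      μ (closedBall y r) ≤ C * ENNReal.ofReal (r ^ s) by simpa using this
  refine isCompact_univ.induction_on (p := fun S => ∃ C : ℝ≥0, ∀ᶠ r in 𝓝[>] (0 : ℝ), ∀ y ∈ S,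
      μ (closedBall y r) ≤ C * ENNReal.ofReal (r ^ s)) ⟨0, by simp⟩ ?_ ?_ ?_
  · rintro S T hST ⟨C, hC⟩
    exact ⟨C, hC.mono fun r hr y hy => hr y (hST hy)⟩
  · rintro S T ⟨C, hC⟩ ⟨D, hD⟩
    refine ⟨max C D, ?_⟩
    filter_upwards [hC, hD] with r hCr hDr y hy
    rcases hy with hy | hy
    · exact (hCr y hy).trans (by gcongr; exact le_max_left C D)
    · exact (hDr y hy).trans (by gcongr; exact le_max_right C D)
  · rintro x -
    obtain ⟨C, U, hU, hC⟩ := h x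
    exact ⟨U, mem_nhdsWithin_of_mem_nhds hU, C, hC⟩

lemma isUpperRegular_of_locally [CompactSpace X] (hs : 0 ≤ s)
    (h : ∀ x : X, ∃ C : ℝ≥0, ∃ U ∈ 𝓝 x, ∀ᶠ r in 𝓝[>] (0 : ℝ), ∀ y ∈ U,
      μ (closedBall y r) ≤ C * ENNReal.ofReal (r ^ s)) :
    IsUpperRegular μ s := by
  obtain ⟨C, hC⟩ := exists_eventually_forall_measure_closedBall_le h
  obtain ⟨δ, hδ : 0 < δ, hCδ⟩ := mem_nhdsGT_iff_exists_Ioc_subset.1 hC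
  have hfin : μ Set.univ ≠ ∞ := by
    refine (isCompact_univ.measure_lt_top_of_nhdsWithin fun x _ => ?_).ne
    exact ⟨closedBall x δ, mem_nhdsWithin_of_mem_nhds (closedBall_mem_nhds x hδ),
      (hCδ ⟨hδ, le_rfl⟩ x).trans_lt (ENNReal.mul_lt_top ENNReal.coe_lt_top ENNReal.ofReal_lt_top)⟩
  have hδs : ENNReal.ofReal (δ ^ s) ≠ 0 := by positivity
  refine ⟨max C (μ Set.univ / ENNReal.ofReal (δ ^ s)).toNNReal, fun x r hr => ?_⟩
  rcases le_or_gt r δ with hrδ | hrδ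
  · exact (hCδ ⟨hr, hrδ⟩ x).trans (by gcongr; exact le_max_left _ _)
  · calc μ (closedBall x r) ≤ μ Set.univ := measure_mono (Set.subset_univ _)
      _ = (μ Set.univ / ENNReal.ofReal (δ ^ s)).toNNReal * ENNReal.ofReal (δ ^ s) := by
          rw [ENNReal.coe_toNNReal (ENNReal.div_ne_top hfin hδs),
            ENNReal.div_mul_cancel hδs ENNReal.ofReal_ne_top]
      _ ≤ _ := by
          gcongr
          exact le_max_right _ _

end Growth

section Hausdorff

variable {X Y E : Type*}

lemma antilipschitzWith_and_lipschitzOnWith_of_norm_sub [PseudoMetricSpace X]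
    [SeminormedAddCommGroup E] {f : X → E} {S : Set X} {L : ℝ} (hL : 0 < L)
    (h : ∀ y ∈ S, ∀ z ∈ S, (1 / L) * ‖f y - f z‖ ≤ dist y z ∧ dist y z ≤ L * ‖f y - f z‖) :
    AntilipschitzWith L.toNNReal (S.domRestrict f) ∧ LipschitzOnWith L.toNNReal f S := by
  constructor
  · refine .of_le_mul_dist fun y z => ?_
    rw [Real.coe_toNNReal L hL.le, dist_eq_norm]
    exact (h y y.2 z z.2).2
  · refine .of_dist_le_mul fun y hy z hz => ?_
    rw [Real.coe_toNNReal L hL.le, dist_eq_norm, ← inv_mul_le_iff₀ hL, ← one_div]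
    exact (h y hy z hz).1

lemma hausdorffMeasure_le_mul_image [EMetricSpace X] [MeasurableSpace X] [BorelSpace X]
    [EMetricSpace Y] [MeasurableSpace Y] [BorelSpace Y] {f : X → Y} {S : Set X} {K : ℝ≥0}
    (hf : AntilipschitzWith K (S.domRestrict f)) {d : ℝ} (hd : 0 ≤ d) :
    μH[d] S ≤ K ^ d * μH[d] (f '' S) := by
  have hS := (isometry_subtype_coe (s := S)).hausdorffMeasure_image (.inl hd) Set.univ
  rw [Set.image_univ, Subtype.range_coe] at hS
  rw [hS, ← Set.range_domRestrict, ← Set.image_univ]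
  exact hf.le_hausdorffMeasure_image hd Set.univ

variable [NormedAddCommGroup E] [NormedSpace ℝ E] [FiniteDimensional ℝ E] [MeasurableSpace E]
  [BorelSpace E] [MetricSpace X] [MeasurableSpace X] [BorelSpace X]

lemma hausdorffMeasure_closedBall_le_of_bilipschitzOn {f : X → E} {S : Set X} {K L : ℝ≥0}
    (hK : AntilipschitzWith K (S.domRestrict f)) (hL : LipschitzOnWith L f S) {y : X} {r : ℝ}
    (hr : 0 ≤ r) (hS : closedBall y r ⊆ S) :
    μH[Module.finrank ℝ E] (closedBall y r) ≤
      K ^ Module.finrank ℝ E *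
          (L ^ Module.finrank ℝ E * μH[Module.finrank ℝ E] (ball (0 : E) 1)) *
        ENNReal.ofReal (r ^ Module.finrank ℝ E) := by
  have hK' : AntilipschitzWith K ((closedBall y r).domRestrict f) := fun z w =>
    hK ⟨z, hS z.2⟩ ⟨w, hS w.2⟩
  have himage : f '' closedBall y r ⊆ closedBall (f y) (L * r) := by
    rintro _ ⟨z, hz, rfl⟩
    exact (hL.dist_le_mul z (hS hz) y (hS (mem_closedBall_self hr))).trans (by gcongr; exact hz)
  calc μH[Module.finrank ℝ E] (closedBall y r)
      ≤ K ^ (Module.finrank ℝ E : ℝ) * μH[Module.finrank ℝ E] (f '' closedBall y r) :=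
        hausdorffMeasure_le_mul_image hK' (Nat.cast_nonneg _)
    _ ≤ K ^ Module.finrank ℝ E * μH[Module.finrank ℝ E] (closedBall (f y) (L * r)) := by
        rw [ENNReal.rpow_natCast]
        gcongr
    _ = _ := by
        rw [Measure.addHaar_closedBall _ _ (by positivity), mul_pow,
          ENNReal.ofReal_mul (by positivity), ENNReal.ofReal_pow L.coe_nonneg]
        rw [ENNReal.ofReal_coe_nnreal]
        ring

theorem isUpperRegular_hausdorffMeasure_of_locally_bilipschitz [CompactSpace X]
    (h : ∀ x : X, ∃ f : X → E, ∃ U ∈ 𝓝 x, ∃ K L : ℝ≥0,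
      AntilipschitzWith K (U.domRestrict f) ∧ LipschitzOnWith L f U) :
    IsUpperRegular (μH[Module.finrank ℝ E] : Measure X) (Module.finrank ℝ E) := by
  refine isUpperRegular_of_locally (Nat.cast_nonneg _) fun x => ?_
  obtain ⟨f, U, hU, K, L, hK, hL⟩ := h x
  obtain ⟨ε, hε, hεU⟩ := nhds_basis_closedBall.mem_iff.1 hU
  set n := Module.finrank ℝ E
  set b := μH[n] (ball (0 : E) 1)
  have hb : b ≠ ∞ := measure_ball_lt_top.ne
  refine ⟨K ^ n * (L ^ n * b.toNNReal), closedBall x (ε / 2),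
    closedBall_mem_nhds x (half_pos hε), ?_⟩
  filter_upwards [Ioc_mem_nhdsGT (half_pos hε)] with r hr y hy
  have hyr : closedBall y r ⊆ U :=
    (closedBall_subset_closedBall' (by linarith [hr.2, mem_closedBall.1 hy])).trans hεU
  refine (hausdorffMeasure_closedBall_le_of_bilipschitzOn hK hL hr.1.le hyr).trans_eq ?_
  rw [Real.rpow_natCast]
  push_cast
  rw [ENNReal.coe_toNNReal hb]

end Hausdorff

section RealPowers

variable {p β : ℝ}

lemma rpow_neg_le_mul_rpow_neg {u v c : ℝ} (hu : 0 < u) (hv : 0 < v) (hc : 0 ≤ c)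
    (h : v ≤ c * u) (hp : 0 ≤ p) : u ^ (-p) ≤ c ^ p * v ^ (-p) := by
  rw [Real.rpow_neg hu.le, Real.rpow_neg hv.le, ← div_eq_mul_inv, inv_eq_one_div,
    div_le_div_iff₀ (by positivity) (by positivity), one_mul, ← Real.mul_rpow hc hu.le]
  gcongr

lemma rpow_le_one_add_rpow {u e : ℝ} (hu : 0 ≤ u) (he : 0 ≤ e) (hep : e ≤ p) :
    u ^ e ≤ (1 + u) ^ p :=
  calc u ^ e ≤ (1 + u) ^ e := by gcongr; linarith
    _ ≤ (1 + u) ^ p := by gcongr; linarith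

lemma rpow_mul_one_add_rpow_neg_le {u α : ℝ} (hu : 0 < u) (hβ : 0 ≤ β) (hβα : β ≤ α)
    (hαp : α + β ≤ p) : u ^ α * (1 + u) ^ (-p) ≤ min (u ^ β) (u ^ (-β)) := by
  have key (γ : ℝ) (h0 : 0 ≤ α - γ) (hp : α - γ ≤ p) : u ^ α * (1 + u) ^ (-p) ≤ u ^ γ := by
    rw [Real.rpow_neg (by positivity), ← div_eq_mul_inv, div_le_iff₀ (by positivity),
      ← sub_add_cancel α γ, Real.rpow_add hu, mul_comm]
    gcongr
    exact rpow_le_one_add_rpow hu.le (by linarith) (by linarith)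
  exact le_min (key β (by linarith) (by linarith)) (key (-β) (by linarith) (by linarith))

lemma dyadic_weight_mul_rpow_radius {s t : ℝ} (ht : 0 < t) (m : ℕ) :
    t ^ (-s) * (2 ^ m) ^ (-p) * (2 ^ (m + 1) * t) ^ s = 2 ^ s * (2 ^ (s - p)) ^ m := by
  rw [← Real.rpow_pow_comm zero_le_two, Real.mul_rpow (by positivity) ht.le, pow_succ,
    Real.mul_rpow (by positivity) zero_le_two, ← Real.rpow_pow_comm zero_le_two,
    Real.rpow_neg ht.le, sub_eq_add_neg, Real.rpow_add two_pos, mul_pow]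
  field_simp

end RealPowers

section DecayKernel

variable {X : Type*} [PseudoMetricSpace X] {s p t J β : ℝ} {x y w : X}

/-- The model decay of the functions in `𝒩_{x,t}`, with the dimension `s` and the order of decay
`p` kept apart: up to the factor `2 ^ p`, the pointwise conditions of orders `0` and `p` that
define `𝒩_{x,t}` amount to being dominated by this kernel. -/
def decayKernel (s p t : ℝ) (x y : X) : ℝ :=
  t ^ (-s) * (1 + dist x y / t) ^ (-p)

lemma decayKernel_nonneg (ht : 0 ≤ t) : 0 ≤ decayKernel s p t x y := by
  unfold decayKernel
  positivity

lemma continuous_decayKernel_left (ht : 0 < t) : Continuous fun z => decayKernel s p t z y := by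
  unfold decayKernel
  refine continuous_const.mul (.rpow_const (by fun_prop) fun z => .inl ?_)
  positivity

lemma le_mul_decayKernel_of_rpow_mul_le_one {b : ℝ} (ht : 0 < t) (hp : 0 ≤ p)
    (h₀ : t ^ s * b ≤ 1) (hₚ : t ^ s * ((dist x y / t) ^ p * b) ≤ 1) :
    b ≤ 2 ^ p * decayKernel s p t x y := by
  rw [decayKernel]
  set v := dist x y / t
  have : 0 ≤ v := by positivity
  have hmax : max 1 v ^ p * (t ^ s * b) ≤ 1 := by
    rcases max_choice 1 v with h | h <;> rw [h]
    · rwa [Real.one_rpow, one_mul]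
    · linarith
  have hb_le : b ≤ t ^ (-s) * max 1 v ^ (-p) := by
    rw [Real.rpow_neg ht.le, Real.rpow_neg (by positivity), ← mul_inv, ← one_div,
      le_div_iff₀ (by positivity)]
    linarith
  have hcompare : max 1 v ^ (-p) ≤ 2 ^ p * (1 + v) ^ (-p) :=
    rpow_neg_le_mul_rpow_neg (by positivity) (by positivity) zero_le_two
      (by linarith [le_max_left 1 v, le_max_right 1 v]) hp
  calc b ≤ t ^ (-s) * (2 ^ p * (1 + v) ^ (-p)) := hb_le.trans (by gcongr)
    _ = 2 ^ p * (t ^ (-s) * (1 + v) ^ (-p)) := by ring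

lemma norm_le_of_mem_NClass {n : ℕ} {M : Type*} [MetricSpace M]
    [ChartedSpace (EuclideanSpace ℝ (Fin n)) M] {x y : M} {t : ℝ} {Φ : M → ℂ} (ht : 0 < t)
    (hΦ : Φ ∈ NClass n x t) : ‖Φ y‖ ≤ 2 ^ (n + 2 : ℝ) * decayKernel n (n + 2) t x y := by
  refine le_mul_decayKernel_of_rpow_mul_le_one ht (by positivity) ?_ ?_
  · simpa using hΦ.2 y 0 (by simp)
  · exact_mod_cast hΦ.2 y (n + 2) le_rfl

lemma decayKernel_le_mul_of_dist_le (ht : 0 < t) (hp : 0 ≤ p) (h : dist x w ≤ t) :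
    decayKernel s p t w y ≤ 2 ^ p * decayKernel s p t x y := by
  have hone : 1 + dist x y / t ≤ 2 * (1 + dist w y / t) := by
    have : dist x y / t ≤ (t + dist w y) / t := by
      gcongr
      linarith [dist_triangle x w y]
    rw [add_div, div_self ht.ne'] at this
    linarith [show 0 ≤ dist w y / t by positivity]
  calc decayKernel s p t w y ≤ t ^ (-s) * (2 ^ p * (1 + dist x y / t) ^ (-p)) := by
        unfold decayKernel
        gcongr
        exact rpow_neg_le_mul_rpow_neg (by positivity) (by positivity) zero_le_two hone hp
    _ = 2 ^ p * decayKernel s p t x y := by rw [decayKernel]; ring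

lemma rpow_mul_decayKernel_le {d : ℝ} (ht : 0 < t) (hd : 0 < d) (hdist : d / 2 ≤ dist w x)
    (hβ : 0 ≤ β) (hβJ : β ≤ s + J) (hJp : s + J + β ≤ p) :
    t ^ (-J) * decayKernel s p t w x ≤
      2 ^ p * d ^ (-s - J) * min (d ^ β / t ^ β) (t ^ β / d ^ β) := by
  have hone : 1 + d / t ≤ 2 * (1 + dist w x / t) := by
    have : d / 2 / t ≤ dist w x / t := by gcongr
    rw [div_right_comm] at this
    linarith
  have hscale : t ^ (-J) * t ^ (-s) = d ^ (-s - J) * (d / t) ^ (s + J) := by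
    rw [Real.div_rpow hd.le ht.le, ← Real.rpow_add ht, show -s - J = -(s + J) by ring,
      show -J + -s = -(s + J) by ring, Real.rpow_neg hd.le, Real.rpow_neg ht.le]
    field_simp
  have hmin : min ((d / t) ^ β) ((d / t) ^ (-β)) = min (d ^ β / t ^ β) (t ^ β / d ^ β) := by
    rw [Real.rpow_neg (by positivity), Real.div_rpow hd.le ht.le, inv_div]
  calc t ^ (-J) * decayKernel s p t w x
      ≤ t ^ (-J) * (t ^ (-s) * (2 ^ p * (1 + d / t) ^ (-p))) := by
        unfold decayKernel
        gcongr
        exact rpow_neg_le_mul_rpow_neg (by positivity) (by positivity) zero_le_two hone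
          (by linarith)
    _ = 2 ^ p * d ^ (-s - J) * ((d / t) ^ (s + J) * (1 + d / t) ^ (-p)) := by
        rw [← mul_assoc, hscale]
        ring
    _ ≤ 2 ^ p * d ^ (-s - J) * min ((d / t) ^ β) ((d / t) ^ (-β)) := by
        gcongr
        exact rpow_mul_one_add_rpow_neg_le (by positivity) hβ hβJ hJp
    _ = _ := by rw [hmin]

lemma rpow_mul_decayKernel_mul_decayKernel_le (ht : 0 < t) (hxy : 0 < dist x y)
    (hβ : 0 ≤ β) (hβJ : β ≤ s + J) (hJp : s + J + β ≤ p) :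
    t ^ (-J) * (decayKernel s p t w x * decayKernel s p t w y) ≤
      2 ^ p * dist x y ^ (-s - J) * min (dist x y ^ β / t ^ β) (t ^ β / dist x y ^ β) *
        (decayKernel s p t w x + decayKernel s p t w y) := by
  have hx : 0 ≤ decayKernel s p t w x := decayKernel_nonneg ht.le
  have hy : 0 ≤ decayKernel s p t w y := decayKernel_nonneg ht.le
  set q := 2 ^ p * dist x y ^ (-s - J) * min (dist x y ^ β / t ^ β) (t ^ β / dist x y ^ β)
  have : 0 ≤ q := by positivity
  have hfar : dist x y / 2 ≤ dist w x ∨ dist x y / 2 ≤ dist w y := by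
    by_contra! h
    linarith [dist_triangle_left x y w]
  rcases hfar with h | h
  · calc _ = t ^ (-J) * decayKernel s p t w x * decayKernel s p t w y := by ring
      _ ≤ q * decayKernel s p t w y := by
          gcongr
          exact rpow_mul_decayKernel_le ht hxy h hβ hβJ hJp
      _ ≤ _ := by gcongr; linarith
  · calc _ = t ^ (-J) * decayKernel s p t w y * decayKernel s p t w x := by ring
      _ ≤ q * decayKernel s p t w x := by
          gcongr
          exact rpow_mul_decayKernel_le ht hxy h hβ hβJ hJp
      _ ≤ _ := by gcongr; linarith

lemma decayKernel_le_tsum_indicator (ht : 0 < t) (hp : 0 ≤ p) (y z : X) :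
    ENNReal.ofReal (decayKernel s p t z y) ≤ ∑' m : ℕ, (closedBall y (2 ^ (m + 1) * t)).indicator
      (fun _ => ENNReal.ofReal (t ^ (-s) * (2 ^ m) ^ (-p))) z := by
  obtain ⟨m, hm, hm'⟩ := exists_nat_pow_near
    (show 1 ≤ 1 + dist z y / t by linarith [show 0 ≤ dist z y / t by positivity]) one_lt_two
  have hz : z ∈ closedBall y (2 ^ (m + 1) * t) := by
    rw [mem_closedBall, ← div_le_iff₀ ht]
    linarith
  refine le_trans ?_ (ENNReal.le_tsum m)
  rw [Set.indicator_of_mem hz, decayKernel]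
  gcongr ENNReal.ofReal (_ * ?_)
  exact Real.rpow_le_rpow_of_nonpos (by positivity) hm (by linarith)

section Measure

variable [MeasurableSpace X] {μ : Measure X}

lemma IsUpperRegular.exists_lintegral_decayKernel_le [OpensMeasurableSpace X]
    (h : IsUpperRegular μ s) (hp : 0 ≤ p) (hsp : s < p) :
    ∃ D : ℝ≥0, ∀ t : ℝ, 0 < t → ∀ y, ∫⁻ z, ENNReal.ofReal (decayKernel s p t z y) ∂μ ≤ D := by
  obtain ⟨C, hC⟩ := h
  have hratio : (2 : ℝ) ^ (s - p) < 1 := Real.rpow_lt_one_of_one_lt_of_neg one_lt_two (by linarith)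
  have hsum : Summable fun m : ℕ => (2 : ℝ) ^ s * (2 ^ (s - p)) ^ m :=
    (summable_geometric_of_lt_one (by positivity) hratio).mul_left _
  refine ⟨C * (∑' m : ℕ, (2 : ℝ) ^ s * (2 ^ (s - p)) ^ m).toNNReal, fun t ht y => ?_⟩
  calc ∫⁻ z, ENNReal.ofReal (decayKernel s p t z y) ∂μ
      ≤ ∫⁻ z, ∑' m : ℕ, (closedBall y (2 ^ (m + 1) * t)).indicator
          (fun _ => ENNReal.ofReal (t ^ (-s) * (2 ^ m) ^ (-p))) z ∂μ :=
        lintegral_mono (decayKernel_le_tsum_indicator ht hp y)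
    _ = ∑' m : ℕ, ENNReal.ofReal (t ^ (-s) * (2 ^ m) ^ (-p)) *
          μ (closedBall y (2 ^ (m + 1) * t)) := by
        rw [lintegral_tsum fun m =>
          (measurable_const.indicator measurableSet_closedBall).aemeasurable]
        simp only [lintegral_indicator_const measurableSet_closedBall]
    _ ≤ ∑' m : ℕ, C * ENNReal.ofReal (2 ^ s * (2 ^ (s - p)) ^ m) := by
        refine ENNReal.tsum_le_tsum fun m => ?_
        rw [← dyadic_weight_mul_rpow_radius ht m,
          ENNReal.ofReal_mul (p := t ^ (-s) * (2 ^ m) ^ (-p)) (by positivity), mul_left_comm]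
        gcongr
        exact hC y _ (by positivity)
    _ = _ := by
        rw [ENNReal.tsum_mul_left, ← ENNReal.ofReal_tsum_of_nonneg (fun m => by positivity) hsum,
          ENNReal.coe_mul, ENNReal.ofReal]

variable {ι : Type*} [Countable ι] {E : ι → Set X} {c : ι → X}

lemma tsum_measure_mul_decayKernel_le [OpensMeasurableSpace X] (ht : 0 < t) (hp : 0 ≤ p)
    (hE : ∀ k, MeasurableSet (E k)) (hdisj : Pairwise fun k k' => Disjoint (E k) (E k'))
    (hsub : ∀ k, E k ⊆ closedBall (c k) t) :
    ∑' k, μ (E k) * ENNReal.ofReal (decayKernel s p t (c k) y) ≤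
      ENNReal.ofReal (2 ^ p) * ∫⁻ z, ENNReal.ofReal (decayKernel s p t z y) ∂μ :=
  calc ∑' k, μ (E k) * ENNReal.ofReal (decayKernel s p t (c k) y)
      ≤ ∑' k, ∫⁻ z in E k, ENNReal.ofReal (2 ^ p) * ENNReal.ofReal (decayKernel s p t z y) ∂μ := by
        refine ENNReal.tsum_le_tsum fun k => ?_
        rw [mul_comm, ← setLIntegral_const]
        refine setLIntegral_mono' (hE k) fun z hz => ?_
        rw [← ENNReal.ofReal_mul (by positivity)]
        exact ENNReal.ofReal_le_ofReal (decayKernel_le_mul_of_dist_le ht hp (hsub k hz))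
    _ = ∫⁻ z in ⋃ k, E k, ENNReal.ofReal (2 ^ p) * ENNReal.ofReal (decayKernel s p t z y) ∂μ :=
        (lintegral_iUnion hE hdisj _).symm
    _ ≤ ∫⁻ z, ENNReal.ofReal (2 ^ p) * ENNReal.ofReal (decayKernel s p t z y) ∂μ :=
        setLIntegral_le_lintegral _ _
    _ = _ := lintegral_const_mul _ (continuous_decayKernel_left ht).measurable.ennreal_ofReal

lemma tsum_measureReal_mul_decayKernel_mul_decayKernel_le [OpensMeasurableSpace X] (ht : 0 < t)
    (hp : 0 ≤ p) (hE : ∀ k, MeasurableSet (E k))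
    (hdisj : Pairwise fun k k' => Disjoint (E k) (E k'))
    (hsub : ∀ k, E k ⊆ closedBall (c k) t) (hxy : 0 < dist x y) (hβ : 0 ≤ β)
    (hβJ : β ≤ s + J) (hJp : s + J + β ≤ p) :
    ∑' k, ENNReal.ofReal (t ^ (-J) *
        (μ.real (E k) * (decayKernel s p t (c k) x * decayKernel s p t (c k) y))) ≤
      ENNReal.ofReal (2 ^ p * dist x y ^ (-s - J) *
          min (dist x y ^ β / t ^ β) (t ^ β / dist x y ^ β)) *
        (ENNReal.ofReal (2 ^ p) * (∫⁻ z, ENNReal.ofReal (decayKernel s p t z x) ∂μ +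
          ∫⁻ z, ENNReal.ofReal (decayKernel s p t z y) ∂μ)) := by
  have hnonneg (w z : X) : 0 ≤ decayKernel s p t w z := decayKernel_nonneg ht.le
  set q := 2 ^ p * dist x y ^ (-s - J) * min (dist x y ^ β / t ^ β) (t ^ β / dist x y ^ β)
  have hq : 0 ≤ q := by positivity
  have hterm (k : ι) : ENNReal.ofReal (t ^ (-J) *
        (μ.real (E k) * (decayKernel s p t (c k) x * decayKernel s p t (c k) y))) ≤
      ENNReal.ofReal q * (μ (E k) * ENNReal.ofReal (decayKernel s p t (c k) x) +
        μ (E k) * ENNReal.ofReal (decayKernel s p t (c k) y)) :=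
    calc _ ≤ ENNReal.ofReal (q * (μ.real (E k) *
            (decayKernel s p t (c k) x + decayKernel s p t (c k) y))) := by
          rw [mul_left_comm, mul_left_comm q]
          exact ENNReal.ofReal_le_ofReal (mul_le_mul_of_nonneg_left
            (rpow_mul_decayKernel_mul_decayKernel_le ht hxy hβ hβJ hJp) measureReal_nonneg)
      _ = ENNReal.ofReal q * (ENNReal.ofReal (μ.real (E k)) *
            (ENNReal.ofReal (decayKernel s p t (c k) x) +
              ENNReal.ofReal (decayKernel s p t (c k) y))) := by
          rw [ENNReal.ofReal_mul hq, ENNReal.ofReal_mul measureReal_nonneg,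
            ENNReal.ofReal_add (hnonneg _ _) (hnonneg _ _)]
      _ ≤ _ := by
          rw [← mul_add]
          gcongr
          exact ENNReal.ofReal_toReal_le
  refine (ENNReal.tsum_le_tsum hterm).trans ?_
  rw [ENNReal.tsum_mul_left, ENNReal.tsum_add, mul_add (ENNReal.ofReal (2 ^ p))]
  gcongr <;> exact tsum_measure_mul_decayKernel_le ht hp hE hdisj hsub

omit [Countable ι] in
lemma tsum_measureReal_mul_norm_mul_norm_le_mul_tsum {F : Type*} [SeminormedAddCommGroup F]
    {Φ Ψ : ι → X → F} {A : ℝ} (ht : 0 < t)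
    (hΦ : ∀ k, ‖Φ k x‖ ≤ A * decayKernel s p t (c k) x)
    (hΨ : ∀ k, ‖Ψ k y‖ ≤ A * decayKernel s p t (c k) y) :
    ∑' k, ENNReal.ofReal (t ^ (-J) * (μ.real (E k) * (‖Φ k x‖ * ‖Ψ k y‖))) ≤
      ENNReal.ofReal (A ^ 2) * ∑' k, ENNReal.ofReal (t ^ (-J) *
        (μ.real (E k) * (decayKernel s p t (c k) x * decayKernel s p t (c k) y))) := by
  rw [← ENNReal.tsum_mul_left]
  refine ENNReal.tsum_le_tsum fun k => ?_
  rw [← ENNReal.ofReal_mul (by positivity)]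
  refine ENNReal.ofReal_le_ofReal ?_
  calc _ ≤ t ^ (-J) * (μ.real (E k) *
          (A * decayKernel s p t (c k) x * (A * decayKernel s p t (c k) y))) := by
        gcongr
        · exact (norm_nonneg _).trans (hΦ k)
        · exact hΦ k
        · exact hΨ k
    _ = _ := by ring

lemma tsum_measureReal_mul_norm_mul_norm_le [OpensMeasurableSpace X] {F : Type*}
    [SeminormedAddCommGroup F] {Φ Ψ : ι → X → F} {A : ℝ} {D : ℝ≥0} (ht : 0 < t) (hp : 0 ≤ p)
    (hD : ∀ y, ∫⁻ z, ENNReal.ofReal (decayKernel s p t z y) ∂μ ≤ D)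
    (hE : ∀ k, MeasurableSet (E k)) (hdisj : Pairwise fun k k' => Disjoint (E k) (E k'))
    (hsub : ∀ k, E k ⊆ closedBall (c k) t)
    (hΦ : ∀ k, ‖Φ k x‖ ≤ A * decayKernel s p t (c k) x)
    (hΨ : ∀ k, ‖Ψ k y‖ ≤ A * decayKernel s p t (c k) y) (hxy : 0 < dist x y) (hβ : 0 ≤ β)
    (hβJ : β ≤ s + J) (hJp : s + J + β ≤ p) :
    ∑' k, ENNReal.ofReal (t ^ (-J) * (μ.real (E k) * (‖Φ k x‖ * ‖Ψ k y‖))) ≤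
      ENNReal.ofReal (2 * A ^ 2 * 2 ^ p * 2 ^ p * D * dist x y ^ (-s - J) *
        min (dist x y ^ β / t ^ β) (t ^ β / dist x y ^ β)) := by
  set q := 2 ^ p * dist x y ^ (-s - J) * min (dist x y ^ β / t ^ β) (t ^ β / dist x y ^ β)
  have hq : 0 ≤ q := by positivity
  calc _ ≤ ENNReal.ofReal (A ^ 2) * ∑' k, ENNReal.ofReal (t ^ (-J) *
          (μ.real (E k) * (decayKernel s p t (c k) x * decayKernel s p t (c k) y))) :=
        tsum_measureReal_mul_norm_mul_norm_le_mul_tsum ht hΦ hΨ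
    _ ≤ ENNReal.ofReal (A ^ 2) * (ENNReal.ofReal q * (ENNReal.ofReal (2 ^ p) * (D + D))) := by
        gcongr
        refine (tsum_measureReal_mul_decayKernel_mul_decayKernel_le ht hp hE hdisj hsub hxy hβ hβJ
          hJp).trans ?_
        gcongr <;> exact hD _
    _ = ENNReal.ofReal (A ^ 2 * (q * (2 ^ p * (D + D)))) := by
        rw [ENNReal.ofReal_mul (p := A ^ 2) (by positivity), ENNReal.ofReal_mul hq,
          ENNReal.ofReal_mul (p := 2 ^ p) (by positivity),
          ENNReal.ofReal_add D.coe_nonneg D.coe_nonneg, ENNReal.ofReal_coe_nnreal]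
    _ = _ := by
        congr 1
        ring

end Measure

end DecayKernel

section Scales

variable {a : ℝ}

lemma summable_zpow_one_sub_abs (ha : 1 < a) : Summable fun j : ℤ => a ^ (1 - |j|) := by
  have ha₀ : a ≠ 0 := by positivity
  have hgeom : Summable fun m : ℕ => a * a⁻¹ ^ m :=
    (summable_geometric_of_lt_one (by positivity) (inv_lt_one_of_one_lt₀ ha)).mul_left a
  apply Summable.of_nat_of_neg <;>
    simpa [zpow_sub₀ ha₀, div_eq_mul_inv] using hgeom

lemma min_div_zpow_le {d : ℝ} {i : ℤ} (ha : 1 < a) (hd : 0 < d)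
    (hi : d ∈ Set.Ico (a ^ i) (a ^ (i + 1))) (j : ℤ) :
    min (d / a ^ (j + i)) (a ^ (j + i) / d) ≤ a ^ (1 - |j|) := by
  have ha₀ : 0 < a := by positivity
  rcases abs_cases j with ⟨hj, -⟩ | ⟨hj, -⟩ <;> rw [hj]
  · refine min_le_of_left_le ?_
    rw [div_le_iff₀ (by positivity), ← zpow_add₀ ha₀.ne', show 1 - j + (j + i) = i + 1 by ring]
    exact hi.2.le
  · refine min_le_of_right_le ?_
    rw [div_le_iff₀ hd]
    calc a ^ (j + i) ≤ a ^ (1 - -j + i) := zpow_le_zpow_right₀ ha.le (by linarith)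
      _ = a ^ (1 - -j) * a ^ i := zpow_add₀ ha₀.ne' _ _
      _ ≤ a ^ (1 - -j) * d := by gcongr; exact hi.1

lemma exists_tsum_min_div_zpow_le (ha : 1 < a) :
    ∃ G : ℝ≥0, ∀ d : ℝ, 0 < d → ∑' j : ℤ, ENNReal.ofReal (min (d / a ^ j) (a ^ j / d)) ≤ G := by
  refine ⟨(∑' j : ℤ, a ^ (1 - |j|)).toNNReal, fun d hd => ?_⟩
  obtain ⟨i, hi⟩ := exists_mem_Ico_zpow hd ha
  calc ∑' j : ℤ, ENNReal.ofReal (min (d / a ^ j) (a ^ j / d))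
      = ∑' j : ℤ, ENNReal.ofReal (min (d / a ^ (j + i)) (a ^ (j + i) / d)) :=
        ((Equiv.addRight i).tsum_eq _).symm
    _ ≤ ∑' j : ℤ, ENNReal.ofReal (a ^ (1 - |j|)) :=
        ENNReal.tsum_le_tsum fun j => ENNReal.ofReal_le_ofReal (min_div_zpow_le ha hd hi j)
    _ = _ := (ENNReal.ofReal_tsum_of_nonneg (fun j => by positivity)
        (summable_zpow_one_sub_abs ha)).symm

lemma exists_tsum_min_rpow_div_le {β : ℝ} (ha : 1 < a) (hβ : 0 < β) :
    ∃ G : ℝ≥0, ∀ d : ℝ, 0 < d → ∑' j : ℤ, ENNReal.ofReal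
      (min (d ^ β / (a ^ j) ^ β) ((a ^ j) ^ β / d ^ β)) ≤ G := by
  obtain ⟨G, hG⟩ := exists_tsum_min_div_zpow_le (Real.one_lt_rpow ha hβ)
  refine ⟨G, fun d hd => ?_⟩
  simpa only [Real.rpow_zpow_comm (zero_le_one.trans ha.le)] using hG (d ^ β) (by positivity)

end Scales

theorem statement_8_general {X F : Type*} [PseudoMetricSpace X] [MeasurableSpace X]
    [OpensMeasurableSpace X] [SeminormedAddCommGroup F] (μ : Measure X) (s p J₀ J₁ a A : ℝ)
    (hμ : IsUpperRegular μ s) (hp : 0 ≤ p) (hsp : s < p) (hJ₀ : 0 < s + J₀) (hJ₁ : s + J₁ < p)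
    (ha : 1 < a) :
    ∃ C₃ : ℝ, 0 < C₃ ∧
      ∀ (ι : ℤ → Type*) [∀ j, Countable (ι j)] (E : (j : ℤ) → ι j → Set X),
        (∀ j k, MeasurableSet (E j k)) →
        (∀ j, Pairwise fun k k' => Disjoint (E j k) (E j k')) →
        ∀ (xp : (j : ℤ) → ι j → X), (∀ j k, E j k ⊆ closedBall (xp j k) (a ^ j)) →
        ∀ (Φ Ψ : (j : ℤ) → ι j → (X → F)),
          (∀ j k x, ‖Φ j k x‖ ≤ A * decayKernel s p (a ^ j) (xp j k) x) →
          (∀ j k x, ‖Ψ j k x‖ ≤ A * decayKernel s p (a ^ j) (xp j k) x) →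
        ∀ J : ℝ, J₀ ≤ J → J ≤ J₁ →
        ∀ x y : X, 0 < dist x y →
          ∑' i : (j : ℤ) × ι j,
              ENNReal.ofReal (a ^ (-(i.1 : ℝ) * J) * (μ.real (E i.1 i.2) *
                (‖Φ i.1 i.2 x‖ * ‖Ψ i.1 i.2 y‖))) ≤
            ENNReal.ofReal (C₃ * dist x y ^ (-s - J)) := by
  have ha₀ : 0 < a := by positivity
  obtain ⟨β, hβ, hβmin⟩ := exists_between (lt_min hJ₀ (sub_pos.2 hJ₁))
  obtain ⟨hβJ₀, hβJ₁⟩ := lt_min_iff.1 hβmin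
  obtain ⟨D, hD⟩ := hμ.exists_lintegral_decayKernel_le hp hsp
  obtain ⟨G, hG⟩ := exists_tsum_min_rpow_div_le ha hβ
  set κ := 2 * A ^ 2 * 2 ^ p * 2 ^ p * D
  refine ⟨κ * G + 1, by positivity, ?_⟩
  intro ι _ E hE hdisj xp hsub Φ Ψ hΦ hΨ J hJJ₀ hJJ₁ x y hxy
  set w : ℤ → ℝ := fun j => min (dist x y ^ β / (a ^ j) ^ β) ((a ^ j) ^ β / dist x y ^ β)
  have hscale (j : ℤ) : ∑' k, ENNReal.ofReal (a ^ (-(j : ℝ) * J) *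
        (μ.real (E j k) * (‖Φ j k x‖ * ‖Ψ j k y‖))) ≤
      ENNReal.ofReal (κ * dist x y ^ (-s - J) * w j) := by
    have ht : 0 < a ^ j := by positivity
    rw [neg_mul_comm, Real.rpow_intCast_mul ha₀.le]
    exact tsum_measureReal_mul_norm_mul_norm_le ht hp (hD _ ht) (hE j) (hdisj j) (hsub j)
      (hΦ j · x) (hΨ j · y) hxy hβ.le (by linarith) (by linarith)
  calc _ ≤ ∑' j : ℤ, ENNReal.ofReal (κ * dist x y ^ (-s - J) * w j) := by
        rw [ENNReal.tsum_sigma']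
        exact ENNReal.tsum_le_tsum hscale
    _ = ENNReal.ofReal (κ * dist x y ^ (-s - J)) * ∑' j, ENNReal.ofReal (w j) := by
        rw [← ENNReal.tsum_mul_left]
        exact tsum_congr fun j => ENNReal.ofReal_mul (by positivity)
    _ ≤ ENNReal.ofReal (κ * dist x y ^ (-s - J)) * G := by
        gcongr
        exact hG _ hxy
    _ = ENNReal.ofReal (κ * G * dist x y ^ (-s - J)) := by
        rw [← ENNReal.ofReal_coe_nnreal, ← ENNReal.ofReal_mul (by positivity), mul_right_comm]
    _ ≤ _ := by
        gcongr
        exact le_add_of_nonneg_right zero_le_one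

/-- **Near-diagonal summation estimate.**  On a smooth compact Riemannian
`n`-manifold `M`, given `a > 1`, there is `C₃ > 0` such that: for any partitions
`{E_{j,k}}` of `M` (for `j ∈ ℤ`) into finitely many measurable pieces of diameter
`< a^j`, points `x_{j,k} ∈ E_{j,k}`, functions `Φ_{j,k}, Ψ_{j,k} ∈ 𝒩_{x_{j,k},a^j}`
and `0 ≤ J ≤ 1`, one has for `x ≠ y`:
`∑_{j,k} a^{−jJ} μ(E_{j,k}) |Φ_{j,k}(x)Ψ_{j,k}(y)| ≤ C₃ d(x,y)^{−n−J}`. -/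
theorem statement_8 (n : ℕ) (hn : 1 ≤ n)
    (M : Type*) [MetricSpace M] [CompactSpace M]
    [ChartedSpace (EuclideanSpace ℝ (Fin n)) M] [IsManifold (𝓡 n) (⊤ : ℕ∞) M]
    [MeasurableSpace M] [BorelSpace M]
    -- the geodesic distance is locally bi-Lipschitz comparable to chart coordinates
    (hbilip : ∀ x : M, ∃ ε : ℝ, 0 < ε ∧ ∃ L : ℝ, 0 < L ∧
      ball x ε ⊆ (chartAt (EuclideanSpace ℝ (Fin n)) x).source ∧
      ∀ y ∈ ball x ε, ∀ z ∈ ball x ε,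
        (1 / L) * ‖chartAt (EuclideanSpace ℝ (Fin n)) x y -
            chartAt (EuclideanSpace ℝ (Fin n)) x z‖ ≤ dist y z ∧
        dist y z ≤ L * ‖chartAt (EuclideanSpace ℝ (Fin n)) x y -
            chartAt (EuclideanSpace ℝ (Fin n)) x z‖)
    -- the Riemannian measure is the `n`-dimensional Hausdorff measure of `d`
    (μ : Measure M) (hμ : μ = μH[(n : ℝ)])
    (a : ℝ) (ha : 1 < a) :
    ∃ C₃ : ℝ, 0 < C₃ ∧
      ∀ (N : ℤ → ℕ) (E : (j : ℤ) → Fin (N j) → Set M),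
        (∀ j k, MeasurableSet (E j k)) →
        (∀ j, Pairwise fun k k' => Disjoint (E j k) (E j k')) →
        (∀ j, (⋃ k, E j k) = Set.univ) →
        (∀ j k, Metric.diam (E j k) < a ^ j) →
        ∀ (xp : (j : ℤ) → Fin (N j) → M), (∀ j k, xp j k ∈ E j k) →
        ∀ (Φ Ψ : (j : ℤ) → Fin (N j) → (M → ℂ)),
          (∀ j k, Φ j k ∈ NClass n (xp j k) (a ^ j)) →
          (∀ j k, Ψ j k ∈ NClass n (xp j k) (a ^ j)) →
        ∀ J : ℝ, 0 ≤ J → J ≤ 1 →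
        ∀ x y : M, x ≠ y →
          ∑' p : (j : ℤ) × Fin (N j),
              ENNReal.ofReal (a ^ (-(p.1 : ℝ) * J) * ((μ (E p.1 p.2)).toReal *
                (‖Φ p.1 p.2 x‖ * ‖Ψ p.1 p.2 y‖))) ≤
            ENNReal.ofReal (C₃ * dist x y ^ (-(n : ℝ) - J)) := by
  have hreg : IsUpperRegular μ n := by
    rw [hμ]
    simpa using isUpperRegular_hausdorffMeasure_of_locally_bilipschitz
      (E := EuclideanSpace ℝ (Fin n)) fun x => by
        obtain ⟨ε, hε, L, hL, -, h⟩ := hbilip x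
        exact ⟨chartAt _ x, ball x ε, ball_mem_nhds x hε, _, _,
          antilipschitzWith_and_lipschitzOnWith_of_norm_sub hL h⟩
  obtain ⟨C₃, hC₃, hsum⟩ := statement_8_general (F := ℂ) μ n (n + 2) 0 1 a (2 ^ (n + 2 : ℝ)) hreg
    (by positivity) (by simp) (by simpa using Nat.lt_of_lt_of_le one_pos hn) (by simp) ha
  refine ⟨C₃, hC₃, fun N E hE hdisj _ hdiam xp hxp Φ Ψ hΦ hΨ J hJ₀ hJ₁ x y hxy => ?_⟩
  have hsub (j : ℤ) (k : Fin (N j)) : E j k ⊆ closedBall (xp j k) (a ^ j) := fun z hz =>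
    (dist_le_diam_of_mem isBounded_of_compactSpace hz (hxp j k)).trans (hdiam j k).le
  exact hsum _ E hE hdisj xp hsub Φ Ψ (fun j k _ => norm_le_of_mem_NClass (by positivity) (hΦ j k))
    (fun j k _ => norm_le_of_mem_NClass (by positivity) (hΨ j k)) J hJ₀ hJ₁ x y (dist_pos.2 hxy)
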